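/- In a finite partial Sherk plane in which some line is incident only with thick points, no line has a pole; equivalently, for every point P and line ℓ there is exactly one line incident with P and perpendicular to ℓ. -/

import Mathlib

/-!
The proof has a geometric and an algebraic half.

Geometry. No line is perpendicular to itself, so a line has as many perpendiculars as points. If `l`
is not perpendicular to `m`, sending a point of `l` to a perpendicular of `m` through it is
injective, so by symmetry `l` and `m` have equally many points and the map is bijective. It follows
that a pole of `m` is a point all of whose lines are perpendicular to `m` (`perp_of_two_perps`).
Comparing the pencils of two points on a common line then shows that a line with only thick points
forces every point to have the same degree `r ≥ 3` (`exists_degree`) and every line to have the same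
number `k` of points (`card_pointsOn_const`).

Counting. Let there be `b` lines and let `A` be the adjacency matrix of perpendicularity on lines.
Every point is a pole of the same number `p` of lines, where `k r = b + (r - 1) p`
(`degree_equation`), and `p` is also the number of common perpendiculars of two distinct
intersecting lines. Summing a row of `A²` shows that disjoint lines share all `k` perpendiculars
(`card_commonPerps_of_parallel`). Thus being equal or disjoint is the relation of having the same
perpendiculars, with classes of constant size `s = b - k (r - 1)`.

Algebra. On the classes, perpendicularity is a graph without loops, regular of degree `j = k / s`,
in which any two distinct vertices have exactly `i = p / s` common neighbours, and the parameters
satisfy `j = 1 + (r - 1) i`. As in the friendship theorem, if `i > 0` then modulo a prime `q`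
dividing `j - i = 1 + (r - 2) i` the adjacency matrix `M` satisfies `M² = i J` and `M J = i J`,
where `J` is the all-ones matrix. So `tr (M ^ q) = i ^ q ≠ 0`, whereas
`tr (M ^ q) = (tr M) ^ q = 0`. Hence `p = 0` and there are no poles.
-/

structure PartialSherkPlane (Point Line : Type*) where
  Inc : Point → Line → Prop
  Perp : Line → Line → Prop
  aStar : ∀ P Q : Point, P ≠ Q → ∀ l m : Line,
    Inc P l → Inc Q l → Inc P m → Inc Q m → l = m
  b1 : ∀ l m : Line, Perp l m → Perp m l
  b2 : ∀ l m : Line, Perp l m → ∃ P : Point, Inc P l ∧ Inc P m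
  b3 : ∀ (P : Point) (l : Line), ∃ m : Line, Inc P m ∧ Perp m l
  b4 : ∀ (P : Point) (l : Line), Inc P l → ∃! m : Line, Inc P m ∧ Perp m l
  b5 : ∃ x y z : Line, Perp x y ∧ ¬ Perp x z ∧ ¬ Perp y z ∧
    ¬ ∃ P : Point, Inc P x ∧ Inc P y ∧ Inc P z

/-- `P` is a pole of `l`: `P` is not on `l` and at least two distinct
perpendiculars to `l` pass through `P`. -/
def PartialSherkPlane.IsPole {Point Line : Type*} (G : PartialSherkPlane Point Line)
    (P : Point) (l : Line) : Prop :=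
  ¬ G.Inc P l ∧ ∃ g h : Line, g ≠ h ∧ G.Inc P g ∧ G.Inc P h ∧ G.Perp g l ∧ G.Perp h l

/-! ### Regular graphs with a constant number of common neighbours -/

open Classical in
/-- Let `A` be a loopless `k`-regular graph in which two vertices with different neighbourhoods have
`p` common neighbours and each neighbourhood is shared by `s` vertices. With the stated relations
among the parameters, `p = 0`. The proof passes to the quotient by equality of neighbourhoods and
evaluates the trace of the `q`-th power of its adjacency matrix, for a suitable prime `q`. -/
theorem graph_no_common {L : Type*} [Fintype L] [Nonempty L] (A : L → L → Prop)
    (hs : ∀ l m, A l m → A m l) (hi : ∀ l, ¬ A l l) (k p s r : ℕ)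
    (hk : ∀ l, (Finset.univ.filter fun h => A h l).card = k)
    (hp : ∀ l m, ¬ (∀ h, A h l ↔ A h m) →
      (Finset.univ.filter fun h => A h l ∧ A h m).card = p)
    (hc : ∀ l, (Finset.univ.filter fun m => ∀ h, A h l ↔ A h m).card = s)
    (h1 : s + k * (r - 1) = Fintype.card L)
    (h2 : k * r = Fintype.card L + (r - 1) * p) (hr : 3 ≤ r) : p = 0 := by
  let S : Setoid L := ⟨fun l m => ∀ h, A h l ↔ A h m,
    ⟨fun _ _ => Iff.rfl, fun h x => (h x).symm, fun h h' x => (h x).trans (h' x)⟩⟩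
  let Q := Quotient S
  have hrel : ∀ l m : L, (Quotient.mk S l = Quotient.mk S m) ↔ ∀ h, A h l ↔ A h m :=
    fun l m => Quotient.eq (r := S)
  have hout : ∀ l h : L, A h (Quotient.mk S l).out ↔ A h l := by
    intro l
    exact (hrel _ _).1 (Quotient.out_eq (Quotient.mk S l))
  have hout' : ∀ l h : L, A (Quotient.mk S l).out h ↔ A l h := fun l h =>
    ⟨fun x => hs _ _ ((hout l h).1 (hs _ _ x)), fun x => hs _ _ ((hout l h).2 (hs _ _ x))⟩
  -- Every class has `s` elements, so an invariant predicate is counted on classes up to `s`.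
  have fiber : ∀ f : L → Prop, (∀ l, f (Quotient.mk S l).out ↔ f l) →
      (Finset.univ.filter f).card = s * (Finset.univ.filter fun c : Q => f c.out).card := by
    intro f hf
    rw [Finset.card_eq_sum_card_fiberwise (f := fun l => (Quotient.mk S l : Q))
      (t := Finset.univ.filter fun c : Q => f c.out)]
    · rw [Finset.sum_const_nat (m := s), mul_comm]
      intro c hcf
      rw [← hc c.out]
      congr 1
      ext l
      simp only [Finset.mem_filter, Finset.mem_univ, true_and] at hcf ⊢
      rw [← hrel, Quotient.out_eq]
      constructor
      · exact fun h => h.2.symm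
      · rintro h
        refine ⟨?_, h.symm⟩
        rw [← hf, ← h]
        exact hcf
    · intro l hl
      simp only [Finset.coe_filter, Finset.mem_univ, true_and, Set.mem_ofPred_eq] at hl ⊢
      exact (hf l).2 hl
  have l0 : L := Classical.arbitrary L
  have hb : 0 < Fintype.card L := Fintype.card_pos
  have hspos : 0 < s := by
    rw [← hc l0]
    exact Finset.card_pos.2 ⟨l0, by simp⟩
  have hbt : Fintype.card L = s * Fintype.card Q := by
    simpa using fiber (fun _ => True) (by simp)
  obtain ⟨j, hj⟩ : ∃ j, j = (Finset.univ.filter fun c : Q => A c.out l0).card := ⟨_, rfl⟩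
  have hkj : k = s * j := by
    rw [← hk l0, hj]
    exact fiber (fun h => A h l0) (fun l => hout' l l0)
  have hdeg : ∀ d : Q, (Finset.univ.filter fun c : Q => A c.out d.out).card = j := by
    intro d
    apply Nat.eq_of_mul_eq_mul_left hspos
    rw [← hkj, ← hk d.out]
    exact (fiber (fun h => A h d.out) (fun l => hout' l _)).symm
  have hcom : ∀ d e : Q, d ≠ e →
      s * (Finset.univ.filter fun c : Q => A c.out d.out ∧ A c.out e.out).card = p := by
    intro d e hde
    rw [← hp d.out e.out]
    · convert (fiber (fun h => A h d.out ∧ A h e.out) (fun l => by simp only [hout'])).symm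
    · intro h
      apply hde
      rw [← Quotient.out_eq d, ← Quotient.out_eq e]
      exact (hrel _ _).2 h
  have hkpos : 0 < k := by
    rcases Nat.eq_zero_or_pos k with h | h
    · subst h; omega
    · exact h
  obtain ⟨m0, hm0⟩ : ∃ m, A m l0 := by
    have : 0 < (Finset.univ.filter fun h => A h l0).card := by rw [hk]; exact hkpos
    obtain ⟨m, hm⟩ := Finset.card_pos.1 this
    exact ⟨m, by simpa using hm⟩
  obtain ⟨i, hpi⟩ : ∃ i, p = s * i := by
    refine ⟨_, (hcom (Quotient.mk S l0) (Quotient.mk S m0) ?_).symm⟩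
    intro h
    exact hi m0 (((hrel _ _).1 h m0).1 hm0)
  have hcom' : ∀ d e : Q, d ≠ e →
      (Finset.univ.filter fun c : Q => A c.out d.out ∧ A c.out e.out).card = i := by
    intro d e hde
    exact Nat.eq_of_mul_eq_mul_left hspos ((hcom d e hde).trans hpi)
  obtain ⟨u, rfl⟩ : ∃ u, r = u + 3 := ⟨r - 3, by omega⟩
  obtain ⟨t, ht⟩ : ∃ t, t = Fintype.card Q := ⟨_, rfl⟩
  rw [← ht] at hbt
  have e1 : 1 + j * (u + 2) = t := by
    apply Nat.eq_of_mul_eq_mul_left hspos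
    rw [← hbt, ← h1, hkj]; simp; ring
  have e2 : j = 1 + (u + 2) * i := by
    have : j * (u + 3) = t + (u + 2) * i := by
      apply Nat.eq_of_mul_eq_mul_left hspos
      rw [← mul_assoc, ← hkj, h2, hpi, hbt]; simp; ring
    rw [← e1] at this
    linarith
  rcases Nat.eq_zero_or_pos i with h0 | hipos
  · rw [hpi, h0, mul_zero]
  exfalso
  -- With `r = u + 3`, the number factored here is `j - i`, the square of every eigenvalue of the
  -- quotient graph other than `j`; modulo its prime divisor `q` the square of the adjacency matrix
  -- is a multiple of the all-ones matrix.
  obtain ⟨q, hq, hqd⟩ := Nat.exists_prime_and_dvd (n := 1 + (u + 1) * i) (by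
    have : 0 < (u + 1) * i := by positivity
    omega)
  have : Fact q.Prime := ⟨hq⟩
  have hD : (1 : ZMod q) + (u + 1) * i = 0 := by
    have := (ZMod.natCast_eq_zero_iff _ _).2 hqd
    push_cast at this
    exact this
  have hji : (j : ZMod q) = i := by
    rw [e2]; push_cast; linear_combination hD
  have hti : (t : ZMod q) = i := by
    rw [← e1]; push_cast; rw [hji]; linear_combination hD
  have hi0 : (i : ZMod q) ≠ 0 := by
    intro h
    rw [h] at hD
    simp at hD
  let M : Matrix Q Q (ZMod q) := Matrix.of fun c d => if A c.out d.out then 1 else 0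
  let J : Matrix Q Q (ZMod q) := Matrix.of fun _ _ => 1
  have hMJ : M * J = (i : ZMod q) • J := by
    ext c d
    rw [Matrix.mul_apply]
    simp only [M, J, Matrix.of_apply, Matrix.smul_apply, mul_one, Finset.sum_boole, smul_eq_mul]
    rw [← hji, ← hdeg c]
    congr 2
    ext x
    simp only [Finset.mem_filter, Finset.mem_univ, true_and]
    exact ⟨hs _ _, hs _ _⟩
  have hMM : M * M = (i : ZMod q) • J := by
    ext c d
    rw [Matrix.mul_apply]
    simp only [M, J, Matrix.of_apply, Matrix.smul_apply, mul_one, smul_eq_mul, ← ite_and, mul_ite, mul_zero,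
      Finset.sum_boole]
    by_cases hcd : c = d
    · subst hcd
      rw [← hji, ← hdeg c]
      congr 2
      ext x
      simp only [Finset.mem_filter, Finset.mem_univ, true_and]
      exact ⟨fun h => h.1, fun h => ⟨h, hs _ _ h⟩⟩
    · rw [← hcom' c d hcd]
      congr 2
      ext x
      simp only [Finset.mem_filter, Finset.mem_univ, true_and]
      exact ⟨fun h => ⟨hs _ _ h.2, h.1⟩, fun h => ⟨h.2, hs _ _ h.1⟩⟩
  have hpow : ∀ n : ℕ, M ^ (n + 2) = ((i : ZMod q) ^ (n + 1)) • J := by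
    intro n
    induction n with
    | zero => rw [zero_add, pow_two, hMM]; simp
    | succ n ih =>
      rw [show n + 1 + 2 = (n + 2) + 1 from rfl, pow_succ', ih, Matrix.mul_smul, hMJ, smul_smul, ← pow_succ]
  have htr := ZMod.trace_pow_card (p := q) M
  have htM : M.trace = 0 := by
    simp [Matrix.trace, M, hi]
  have htJ : J.trace = i := by
    rw [← hti, ht]
    simp [Matrix.trace, J]
  obtain ⟨n, rfl⟩ : ∃ n, q = n + 2 := ⟨q - 2, by have := hq.two_le; omega⟩
  rw [htM, hpow, Matrix.trace_smul, htJ, zero_pow (by omega), smul_eq_mul] at htr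
  exact hi0 (by simpa using htr)

namespace PartialSherkPlane

section Geometry

set_option linter.unusedSectionVars false

/-! ### Perpendiculars and poles -/

variable {Point Line : Type*} (G : PartialSherkPlane Point Line)

theorem perp_unique {P : Point} {l m n : Line} (hP : G.Inc P l) (hm : G.Inc P m)
    (hml : G.Perp m l) (hn : G.Inc P n) (hnl : G.Perp n l) : m = n :=
  (G.b4 P l hP).unique ⟨hm, hml⟩ ⟨hn, hnl⟩

/-- No line is perpendicular to itself: such a line would contain every point, and the
configuration of `b5` would be concurrent. -/
theorem perp_irrefl (l : Line) : ¬ G.Perp l l := by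
  intro hl
  have h1 : ∀ m, G.Perp m l → m = l := by
    intro m hm
    obtain ⟨P, hPm, hPl⟩ := G.b2 _ _ hm
    exact G.perp_unique hPl hPm hm hPl hl
  have h2 : ∀ P, G.Inc P l := by
    intro P
    obtain ⟨m, hPm, hm⟩ := G.b3 P l
    rw [← h1 m hm]
    exact hPm
  obtain ⟨x, y, z, hxy, -, -, hn⟩ := G.b5
  obtain ⟨P, hPx, hPy⟩ := G.b2 _ _ hxy
  obtain ⟨m, hPm, hmz⟩ := G.b3 P z
  obtain ⟨R, hRm, hRz⟩ := G.b2 _ _ hmz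
  by_cases hRP : R = P
  · subst hRP
    exact hn ⟨R, hPx, hPy, hRz⟩
  obtain ⟨n, hRn, hnx⟩ := G.b3 R x
  obtain ⟨T, hTn, hTx⟩ := G.b2 _ _ hnx
  by_cases hTP : T = P
  · subst hTP
    have hny : n = y := G.perp_unique hTx hTn hnx hPy (G.b1 _ _ hxy)
    subst hny
    have hnl : n = l := G.aStar R T hRP _ _ hRn hTn (h2 _) (h2 _)
    subst hnl
    have := h1 _ hxy
    subst this
    exact hn ⟨R, hRn, hRn, hRz⟩
  · have hxl : x = l := G.aStar T P hTP _ _ hTx hPx (h2 _) (h2 _)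
    subst hxl
    have := h1 _ (G.b1 _ _ hxy)
    subst this
    exact hn ⟨R, h2 _, h2 _, hRz⟩

theorem perp_ne {l m : Line} (h : G.Perp l m) : l ≠ m := by
  rintro rfl
  exact G.perp_irrefl _ h

variable [Fintype Point] [Fintype Line]

open Classical in
/-- The points of a line. -/
noncomputable def pointsOn (l : Line) : Finset Point := Finset.univ.filter fun P => G.Inc P l

open Classical in
/-- The pencil of lines through a point. -/
noncomputable def pencil (P : Point) : Finset Line := Finset.univ.filter fun l => G.Inc P l

open Classical in
/-- The perpendiculars of a line. -/
noncomputable def perps (l : Line) : Finset Line := Finset.univ.filter fun h => G.Perp h l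

@[simp] theorem mem_pointsOn {P : Point} {l : Line} : P ∈ G.pointsOn l ↔ G.Inc P l := by
  simp [pointsOn]

@[simp] theorem mem_pencil {P : Point} {l : Line} : l ∈ G.pencil P ↔ G.Inc P l := by
  simp [pencil]

@[simp] theorem mem_perps {h l : Line} : h ∈ G.perps l ↔ G.Perp h l := by
  simp [perps]

/-- A line has as many perpendiculars as points, since exactly one perpendicular stands on each
of its points. -/
theorem card_perps (l : Line) : (G.perps l).card = (G.pointsOn l).card := by
  apply le_antisymm
  · refine Finset.card_le_card_of_forall_subsingleton (fun h P => G.Inc P h) ?_ ?_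
    · intro h hh
      obtain ⟨P, hPh, hPl⟩ := G.b2 _ _ (G.mem_perps.1 hh)
      exact ⟨P, G.mem_pointsOn.2 hPl, hPh⟩
    · rintro P hP g ⟨hg, hPg⟩ h ⟨hh, hPh⟩
      exact G.perp_unique (G.mem_pointsOn.1 hP) hPg (G.mem_perps.1 hg) hPh (G.mem_perps.1 hh)
  · refine Finset.card_le_card_of_forall_subsingleton (fun P h => G.Inc P h) ?_ ?_
    · intro P _
      obtain ⟨h, hPh, hh⟩ := G.b3 P l
      exact ⟨h, G.mem_perps.2 hh, hPh⟩
    · rintro h hh P ⟨hP, hPh⟩ Q ⟨hQ, hQh⟩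
      by_contra hPQ
      have := G.aStar P Q hPQ _ _ hPh hQh (G.mem_pointsOn.1 hP) (G.mem_pointsOn.1 hQ)
      exact G.perp_ne (G.mem_perps.1 hh) this

theorem card_pointsOn_le {l m : Line} (hlm : ¬ G.Perp l m) :
    (G.pointsOn l).card ≤ (G.perps m).card := by
  refine Finset.card_le_card_of_forall_subsingleton (fun P h => G.Inc P h) ?_ ?_
  · intro P _
    obtain ⟨h, hPh, hh⟩ := G.b3 P m
    exact ⟨h, G.mem_perps.2 hh, hPh⟩
  · rintro h hh P ⟨hP, hPh⟩ Q ⟨hQ, hQh⟩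
    by_contra hPQ
    have := G.aStar P Q hPQ _ _ hPh hQh (G.mem_pointsOn.1 hP) (G.mem_pointsOn.1 hQ)
    exact hlm (this ▸ G.mem_perps.1 hh)

theorem card_pointsOn_eq {l m : Line} (hlm : ¬ G.Perp l m) :
    (G.pointsOn l).card = (G.pointsOn m).card := by
  apply le_antisymm
  · rw [← G.card_perps m]
    exact G.card_pointsOn_le hlm
  · rw [← G.card_perps l]
    exact G.card_pointsOn_le fun h => hlm (G.b1 _ _ h)

/-- If two perpendiculars of `m` pass through `P`, then every line through `P` is perpendicular to
`m`. Otherwise take a line `l` through `P` not perpendicular to `m`: sending a point of `l` to a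
perpendicular of `m` through it is injective, hence bijective by equality of the cardinalities, so
both perpendiculars through `P` would have to be assigned to `P`. -/
theorem perp_of_two_perps {P : Point} {m g h l : Line} (hgh : g ≠ h) (hPg : G.Inc P g)
    (hPh : G.Inc P h) (hg : G.Perp g m) (hh : G.Perp h m) (hPl : G.Inc P l) : G.Perp l m := by
  by_contra hlm
  choose f hf hfm using fun Q => G.b3 Q m
  have hinj : Set.InjOn f (G.pointsOn l) := by
    intro Q hQ R hR hQR
    by_contra hne
    have := G.aStar Q R hne (f Q) l (hf Q) (by rw [hQR]; exact hf R)
      (G.mem_pointsOn.1 hQ) (G.mem_pointsOn.1 hR)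
    exact hlm (this ▸ hfm Q)
  have hsurj : Set.SurjOn f (G.pointsOn l) (G.perps m) := by
    refine Finset.surjOn_of_injOn_of_card_le f ?_ hinj ?_
    · intro Q _
      exact G.mem_perps.2 (hfm Q)
    · rw [G.card_perps, G.card_pointsOn_eq hlm]
  have key : ∀ e, G.Inc P e → G.Perp e m → f P = e := by
    intro e hPe he
    obtain ⟨Q, hQ, rfl⟩ := hsurj (G.mem_perps.2 he)
    by_cases hQP : Q = P
    · rw [hQP]
    · have := G.aStar Q P hQP (f Q) l (hf Q) hPe (G.mem_pointsOn.1 hQ) hPl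
      exact absurd (this ▸ he) hlm
  exact hgh ((key g hPg hg).symm.trans (key h hPh hh))

/-! ### Degrees of points and sizes of lines -/

theorem card_pencil_le {l x y : Line} {X Y : Point} (hXl : G.Inc X l) (hYl : G.Inc Y l)
    (hXx : G.Inc X x) (hYy : G.Inc Y y) (hyl : G.Perp y l) (hxy : ¬ G.Perp x y) :
    (G.pencil X).card ≤ (G.pencil Y).card := by
  refine Finset.card_le_card_of_forall_subsingleton (fun g h => G.Perp g h) ?_ ?_
  · intro g _
    obtain ⟨h, hYh, hh⟩ := G.b3 Y g
    exact ⟨h, G.mem_pencil.2 hYh, G.b1 _ _ hh⟩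
  · rintro h hh g ⟨hg, hgh⟩ g' ⟨hg', hgh'⟩
    by_contra hne
    have hall : ∀ e, G.Inc X e → G.Perp e h := fun e he =>
      G.perp_of_two_perps hne (G.mem_pencil.1 hg) (G.mem_pencil.1 hg') hgh hgh' he
    have : h = y := G.perp_unique hYl (G.mem_pencil.1 hh) (G.b1 _ _ (hall l hXl)) hYy hyl
    exact hxy (this ▸ hall x hXx)

/-- Two points of `l` have the same degree when the perpendiculars of `l` standing on them are not
perpendicular to each other: then neither point has two perpendiculars to a line through the
other one. -/
theorem card_pencil_eq {l x y : Line} {X Y : Point} (hXl : G.Inc X l) (hYl : G.Inc Y l)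
    (hXx : G.Inc X x) (hYy : G.Inc Y y) (hxl : G.Perp x l) (hyl : G.Perp y l)
    (hxy : ¬ G.Perp x y) : (G.pencil X).card = (G.pencil Y).card :=
  le_antisymm (G.card_pencil_le hXl hYl hXx hYy hyl hxy)
    (G.card_pencil_le hYl hXl hYy hXx hxl fun h => hxy (G.b1 _ _ h))

theorem exists_third {X : Point} (hX : 3 ≤ (G.pencil X).card) (c x : Line) :
    ∃ f, G.Inc X f ∧ f ≠ c ∧ f ≠ x := by
  classical
  have h : ({c, x} : Finset Line).card < (G.pencil X).card :=
    lt_of_le_of_lt Finset.card_le_two hX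
  obtain ⟨f, hf, hfn⟩ := Finset.exists_mem_notMem_of_card_lt_card h
  simp only [Finset.mem_insert, Finset.mem_singleton, not_or] at hfn
  exact ⟨f, G.mem_pencil.1 hf, hfn.1, hfn.2⟩

/-- In a triangle of mutually perpendicular lines `c`, `x`, `y` whose vertex `X = c ∩ x` is thick,
the other two vertices have equal degree. A third line `f` through `X` is also perpendicular to `y`,
and the degrees at `c ∩ y` and `x ∩ y` both agree with the degree at `f ∩ y`. -/
theorem card_pencil_eq_of_triangle {c x y : Line} {X C W : Point} (hXc : G.Inc X c)
    (hXx : G.Inc X x) (hCc : G.Inc C c) (hCy : G.Inc C y) (hWx : G.Inc W x) (hWy : G.Inc W y)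
    (hcx : G.Perp c x) (hcy : G.Perp c y) (hxy : G.Perp x y) (hX : 3 ≤ (G.pencil X).card) :
    (G.pencil C).card = (G.pencil W).card := by
  obtain ⟨f, hXf, hfc, hfx⟩ := G.exists_third hX c x
  have hfy : G.Perp f y := G.perp_of_two_perps (G.perp_ne hcx) hXc hXx hcy hxy hXf
  obtain ⟨F, hFf, hFy⟩ := G.b2 _ _ hfy
  have hcf : ¬ G.Perp c f := fun h =>
    hfx (G.perp_unique hXc hXf (G.b1 _ _ h) hXx (G.b1 _ _ hcx))
  have hxf : ¬ G.Perp x f := fun h => hfc (G.perp_unique hXx hXf (G.b1 _ _ h) hXc hcx)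
  exact (G.card_pencil_eq hCy hFy hCc hFf hcy hfy hcf).trans
    (G.card_pencil_eq hWy hFy hWx hFf hxy hfy hxf).symm

/-- A line incident only with thick points forces all points to have the same degree. -/
theorem exists_degree {l : Line} (hl : ∀ P, G.Inc P l → 3 ≤ (G.pencil P).card) :
    ∃ r, 3 ≤ r ∧ ∀ P, (G.pencil P).card = r := by
  have hconst : ∀ X Y, G.Inc X l → G.Inc Y l → (G.pencil X).card = (G.pencil Y).card := by
    intro X Y hX hY
    obtain ⟨x, hXx, hx⟩ := G.b3 X l
    obtain ⟨y, hYy, hy⟩ := G.b3 Y l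
    by_cases hxy : G.Perp x y
    · obtain ⟨Z, hZx, hZy⟩ := G.b2 _ _ hxy
      have e1 := G.card_pencil_eq_of_triangle hX hXx hY hYy hZx hZy (G.b1 _ _ hx)
        (G.b1 _ _ hy) hxy (hl X hX)
      have e2 := G.card_pencil_eq_of_triangle hY hYy hX hXx hZy hZx (G.b1 _ _ hy)
        (G.b1 _ _ hx) (G.b1 _ _ hxy) (hl Y hY)
      exact e2.trans e1.symm
    · exact G.card_pencil_eq hX hY hXx hYy hx hy hxy
  obtain ⟨x, y, z, hxy, -, -, -⟩ := G.b5
  obtain ⟨O, -, -⟩ := G.b2 _ _ hxy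
  obtain ⟨n, -, hn⟩ := G.b3 O l
  obtain ⟨P₀, -, hP₀⟩ := G.b2 _ _ hn
  refine ⟨_, hl P₀ hP₀, ?_⟩
  intro W
  obtain ⟨x, hWx, hxl⟩ := G.b3 W l
  obtain ⟨X, hXx, hXl⟩ := G.b2 _ _ hxl
  obtain ⟨w, hWw, hwx⟩ := G.b3 W x
  by_cases hlw : G.Perp l w
  · obtain ⟨Y, hYl, hYw⟩ := G.b2 _ _ hlw
    rw [hconst P₀ Y hP₀ hYl]
    exact (G.card_pencil_eq_of_triangle hXl hXx hYl hYw hWx hWw (G.b1 _ _ hxl) hlw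
      (G.b1 _ _ hwx) (hl X hXl)).symm
  · rw [hconst P₀ X hP₀ hXl]
    exact (G.card_pencil_eq hXx hWx hXl hWw (G.b1 _ _ hxl) hwx hlw).symm

theorem card_pointsOn_const {l : Line} (hl : ∀ P, G.Inc P l → 3 ≤ (G.pencil P).card) (m : Line) :
    (G.pointsOn m).card = (G.pointsOn l).card := by
  by_cases hml : G.Perp m l
  · obtain ⟨X, hXm, hXl⟩ := G.b2 _ _ hml
    obtain ⟨f, hXf, hfm, hfl⟩ := G.exists_third (hl X hXl) m l
    have h1 : ¬ G.Perp m f := fun h =>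
      hfl (G.perp_unique hXm hXf (G.b1 _ _ h) hXl (G.b1 _ _ hml))
    have h2 : ¬ G.Perp f l := fun h => hfm (G.perp_unique hXl hXf h hXm hml)
    exact (G.card_pointsOn_eq h1).trans (G.card_pointsOn_eq h2)
  · exact G.card_pointsOn_eq hml

/-! ### Counting common perpendiculars -/

open Classical in
/-- The lines to which every line through `X` is perpendicular; when `X` is on at least two lines,
these are the lines having `X` as a pole. -/
noncomputable def polars (X : Point) : Finset Line :=
  Finset.univ.filter fun h => ∀ g, G.Inc X g → G.Perp g h

open Classical in
/-- The common perpendiculars of two lines. -/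
noncomputable def commonPerps (l m : Line) : Finset Line :=
  Finset.univ.filter fun h => G.Perp h l ∧ G.Perp h m

theorem commonPerps_eq_polars {l m : Line} {X : Point} (hlm : l ≠ m) (hXl : G.Inc X l)
    (hXm : G.Inc X m) : G.commonPerps l m = G.polars X := by
  ext h
  simp only [commonPerps, polars, Finset.mem_filter, Finset.mem_univ, true_and]
  exact ⟨fun hh g hg =>
      G.perp_of_two_perps hlm hXl hXm (G.b1 _ _ hh.1) (G.b1 _ _ hh.2) hg,
    fun hh => ⟨G.b1 _ _ (hh l hXl), G.b1 _ _ (hh m hXm)⟩⟩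

/-- Double counting of the pairs `(g, h)` with `g` through `X` and `h` perpendicular to `g`: a line
`h` occurs once, or with every `g` through `X`. -/
theorem degree_equation {k r : ℕ} (hk : ∀ l, (G.pointsOn l).card = k) (hr : 1 ≤ r) {X : Point}
    (hX : (G.pencil X).card = r) :
    k * r = Fintype.card Line + (r - 1) * (G.polars X).card := by
  classical
  have key := Finset.sum_card_bipartiteAbove_eq_sum_card_bipartiteBelow
    (s := G.pencil X) (t := (Finset.univ : Finset Line)) (fun g h => G.Perp h g)
  have hleft : ∀ g ∈ G.pencil X,
      ((Finset.univ : Finset Line).bipartiteAbove (fun g h => G.Perp h g) g).card = k := by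
    intro g _
    rw [← hk g, ← G.card_perps g]
    congr 1
  have hright : ∀ h : Line,
      ((G.pencil X).bipartiteBelow (fun g h => G.Perp h g) h).card
        = 1 + (r - 1) * (if ∀ g, G.Inc X g → G.Perp g h then 1 else 0) := by
    intro h
    split_ifs with hh
    · have : (G.pencil X).bipartiteBelow (fun g h => G.Perp h g) h = G.pencil X := by
        ext g
        simp only [Finset.mem_bipartiteBelow, mem_pencil, and_iff_left_iff_imp]
        exact fun hg => G.b1 _ _ (hh g hg)
      rw [this, hX]
      omega
    · rw [mul_zero, add_zero, Finset.card_eq_one]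
      obtain ⟨g, hXg, hg⟩ := G.b3 X h
      refine ⟨g, ?_⟩
      ext g'
      simp only [Finset.mem_bipartiteBelow, mem_pencil, Finset.mem_singleton]
      constructor
      · rintro ⟨hXg', hg'⟩
        by_contra hne
        exact hh fun e he => G.perp_of_two_perps hne hXg' hXg (G.b1 _ _ hg') hg he
      · rintro rfl
        exact ⟨hXg, G.b1 _ _ hg⟩
  rw [Finset.sum_const_nat hleft, hX, Finset.sum_congr rfl fun h _ => hright h,
    Finset.sum_add_distrib, ← Finset.mul_sum, Finset.sum_boole] at key
  rw [mul_comm, key]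
  simp [polars]

open Classical in
/-- The lines other than `l` that meet `l`. -/
noncomputable def meeting (l : Line) : Finset Line :=
  (Finset.univ.erase l).filter fun m => ∃ X, G.Inc X l ∧ G.Inc X m

open Classical in
/-- The lines other than `l` that do not meet `l`. -/
noncomputable def parallels (l : Line) : Finset Line :=
  (Finset.univ.erase l).filter fun m => ¬ ∃ X, G.Inc X l ∧ G.Inc X m

theorem sum_split (l : Line) (f : Line → ℕ) :
    ∑ m, f m = f l + (∑ m ∈ G.meeting l, f m + ∑ m ∈ G.parallels l, f m) := by
  classical
  rw [← Finset.add_sum_erase Finset.univ f (Finset.mem_univ l)]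
  congr 1
  rw [← Finset.sum_filter_add_sum_filter_not (Finset.univ.erase l)
    (fun m => ∃ X, G.Inc X l ∧ G.Inc X m)]
  rfl

theorem card_meeting {k r : ℕ} (hk : ∀ l, (G.pointsOn l).card = k)
    (hr : ∀ P, (G.pencil P).card = r) (l : Line) : (G.meeting l).card = k * (r - 1) := by
  classical
  have : G.meeting l = (G.pointsOn l).biUnion fun X => (G.pencil X).erase l := by
    ext m
    simp only [meeting, Finset.mem_filter, Finset.mem_erase, Finset.mem_univ, and_true,
      Finset.mem_biUnion, mem_pointsOn, mem_pencil]
    exact ⟨fun ⟨h, X, h1, h2⟩ => ⟨X, h1, h, h2⟩, fun ⟨X, h1, h, h2⟩ => ⟨h, X, h1, h2⟩⟩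
  rw [this, Finset.card_biUnion, Finset.sum_const_nat (m := r - 1), hk]
  · intro X hX
    rw [Finset.card_erase_of_mem (G.mem_pencil.2 (G.mem_pointsOn.1 hX)), hr]
  · intro X hX Y hY hXY
    refine Finset.disjoint_left.2 fun m hmX hmY => ?_
    simp only [Finset.mem_erase, mem_pencil] at hmX hmY
    exact hmX.1 (G.aStar X Y hXY _ _ hmX.2 hmY.2 (G.mem_pointsOn.1 hX) (G.mem_pointsOn.1 hY))

theorem card_commonPerps_le {k : ℕ} (hk : ∀ l, (G.pointsOn l).card = k) (l m : Line) :
    (G.commonPerps l m).card ≤ k := by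
  rw [← hk l, ← G.card_perps l]
  refine Finset.card_le_card fun h hh => ?_
  simp only [commonPerps, Finset.mem_filter, Finset.mem_univ, true_and] at hh
  exact G.mem_perps.2 hh.1

theorem sum_commonPerps {k : ℕ} (hk : ∀ l, (G.pointsOn l).card = k) (l : Line) :
    ∑ m, (G.commonPerps l m).card = k * k := by
  classical
  have key := Finset.sum_card_bipartiteAbove_eq_sum_card_bipartiteBelow
    (s := (Finset.univ : Finset Line)) (t := G.perps l) (fun m h => G.Perp h m)
  rw [Finset.sum_const_nat (s := G.perps l) (m := k), G.card_perps, hk] at key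
  · rw [← key]
    refine Finset.sum_congr rfl fun m _ => ?_
    congr 1
    ext h
    simp [commonPerps]
  · intro h _
    rw [← hk h, ← G.card_perps h]
    congr 1
    ext m
    simp only [Finset.mem_bipartiteBelow, Finset.mem_univ, true_and, mem_perps]
    exact ⟨G.b1 _ _, G.b1 _ _⟩

/-- Disjoint lines have the same perpendiculars: once the contribution of the intersecting lines
to `∑ m, |commonPerps l m| = k²` is removed, the average over the lines disjoint from `l` is the
maximal possible value `k`. -/
theorem card_commonPerps_of_parallel {k r : ℕ} (hk : ∀ l, (G.pointsOn l).card = k)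
    (hr1 : 2 ≤ r) (hr : ∀ P, (G.pencil P).card = r) {l m : Line} (hm : m ∈ G.parallels l) :
    (G.commonPerps l m).card = k := by
  have hsum := G.sum_split l fun m => (G.commonPerps l m).card
  have hone := G.sum_split l fun _ => 1
  rw [G.sum_commonPerps hk] at hsum
  simp only [Finset.sum_const, smul_eq_mul, mul_one, Finset.card_univ] at hone
  rw [G.card_meeting hk hr] at hone
  have hself : (G.commonPerps l l).card = k := by
    rw [← hk l, ← G.card_perps l]
    congr 1
    ext h
    simp [commonPerps]
  have hmeet : (r - 1) * ∑ m ∈ G.meeting l, (G.commonPerps l m).card +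
      (G.meeting l).card * Fintype.card Line = (G.meeting l).card * (k * r) := by
    rw [Finset.mul_sum, ← smul_eq_mul (G.meeting l).card, ← smul_eq_mul (G.meeting l).card,
      ← Finset.sum_const, ← Finset.sum_const, ← Finset.sum_add_distrib]
    refine Finset.sum_congr rfl fun m hm => ?_
    simp only [meeting, Finset.mem_filter, Finset.mem_erase, Finset.mem_univ, and_true] at hm
    obtain ⟨hml, X, hXl, hXm⟩ := hm
    rw [G.commonPerps_eq_polars (Ne.symm hml) hXl hXm, G.degree_equation hk (by omega) (hr X)]
    ring
  have htot : ∑ m ∈ G.parallels l, (G.commonPerps l m).card = ∑ m ∈ G.parallels l, k := by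
    rw [Finset.sum_const, smul_eq_mul]
    rw [hself] at hsum
    rw [G.card_meeting hk hr] at hmeet
    obtain ⟨u, rfl⟩ : ∃ u, r = u + 2 := ⟨r - 2, by omega⟩
    simp only [show u + 2 - 1 = u + 1 from rfl] at hone hmeet
    have h : ∑ m ∈ G.meeting l, (G.commonPerps l m).card + k * Fintype.card Line
        = k * (k * (u + 2)) := by
      apply Nat.eq_of_mul_eq_mul_left (Nat.succ_pos u)
      rw [Nat.succ_eq_add_one]
      linarith
    rw [hone] at h
    linarith
  exact (Finset.sum_eq_sum_iff_of_le fun m _ => G.card_commonPerps_le hk l m).1 htot m hm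

/-- When some line has only thick points, no point is a pole of any line. -/
theorem polars_eq_empty {l : Line} (hl : ∀ P, G.Inc P l → 3 ≤ (G.pencil P).card) (X : Point) :
    G.polars X = ∅ := by
  classical
  obtain ⟨r, hr3, hr⟩ := G.exists_degree hl
  obtain ⟨k, hk⟩ : ∃ k, ∀ m, (G.pointsOn m).card = k := ⟨_, G.card_pointsOn_const hl⟩
  have hdeg : ∀ P, k * r = Fintype.card Line + (r - 1) * (G.polars P).card :=
    fun P => G.degree_equation hk (by omega) (hr P)
  have hpol : ∀ P, (G.polars P).card = (G.polars X).card := by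
    intro P
    have h := (hdeg P).symm.trans (hdeg X)
    exact Nat.eq_of_mul_eq_mul_left (show 0 < r - 1 by omega) (by omega)
  have hkb : k < Fintype.card Line := by
    rw [← hk l, ← G.card_perps l]
    refine Finset.card_lt_univ_of_notMem (x := l) ?_
    rw [mem_perps]
    exact G.perp_irrefl l
  have hperps : ∀ m, (Finset.univ.filter fun h => G.Perp h m).card = k := by
    intro m
    rw [← hk m, ← G.card_perps m]
    congr 1
  -- Lines with the same perpendiculars are equal or disjoint.
  have hsame : ∀ m n : Line, (∀ h, G.Perp h m ↔ G.Perp h n) ↔ n ∈ insert m (G.parallels m) := by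
    intro m n
    rw [Finset.mem_insert]
    constructor
    · intro h
      by_contra hn
      push Not at hn
      obtain ⟨hnm, hn⟩ := hn
      simp only [parallels, Finset.mem_filter, Finset.mem_erase, Finset.mem_univ, and_true,
        hnm, ne_eq, not_false_eq_true, true_and, not_not] at hn
      obtain ⟨P, hPm, hPn⟩ := hn
      have h1 := congrArg Finset.card (G.commonPerps_eq_polars (Ne.symm hnm) hPm hPn)
      have h2 : G.commonPerps m n = G.perps m := by
        ext e
        simp only [commonPerps, Finset.mem_filter, Finset.mem_univ, true_and, mem_perps, h,
          and_self]
      rw [h2, G.card_perps, hk] at h1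
      have h3 := hdeg P
      rw [← h1] at h3
      obtain ⟨u, rfl⟩ : ∃ u, r = u + 1 := ⟨r - 1, by omega⟩
      simp only [Nat.add_sub_cancel] at h3
      linarith
    · rintro (rfl | hn) h
      · rfl
      · have h1 := G.card_commonPerps_of_parallel hk (by omega) hr hn
        have h2 : G.commonPerps m n = G.perps m := by
          apply Finset.eq_of_subset_of_card_le
          · intro e he
            simp only [commonPerps, Finset.mem_filter, Finset.mem_univ, true_and] at he
            exact G.mem_perps.2 he.1
          · rw [h1, G.card_perps, hk]
        have h3 : G.commonPerps m n = G.perps n := by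
          apply Finset.eq_of_subset_of_card_le
          · intro e he
            simp only [commonPerps, Finset.mem_filter, Finset.mem_univ, true_and] at he
            exact G.mem_perps.2 he.2
          · rw [h1, G.card_perps, hk]
        rw [← mem_perps, ← mem_perps, ← h2, ← h3]
  have hcard : ∀ m, (insert m (G.parallels m)).card + k * (r - 1) = Fintype.card Line := by
    intro m
    have hone := G.sum_split m fun _ => 1
    simp only [Finset.sum_const, smul_eq_mul, mul_one, Finset.card_univ] at hone
    rw [G.card_meeting hk hr] at hone
    rw [Finset.card_insert_of_notMem (by simp [parallels]), hone]
    ring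
  have : Nonempty Line := ⟨l⟩
  rw [← Finset.card_eq_zero]
  refine graph_no_common G.Perp G.b1 G.perp_irrefl k (G.polars X).card
    (insert l (G.parallels l)).card r ?_ ?_ ?_ (hcard l) (hdeg X) hr3
  · intro m
    convert hperps m
  · intro m n hmn
    rw [hsame, Finset.mem_insert] at hmn
    push Not at hmn
    obtain ⟨hnm, hn⟩ := hmn
    simp only [parallels, Finset.mem_filter, Finset.mem_erase, Finset.mem_univ, and_true,
      hnm, ne_eq, not_false_eq_true, true_and, not_not] at hn
    obtain ⟨P, hPm, hPn⟩ := hn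
    rw [← hpol P, ← G.commonPerps_eq_polars (Ne.symm hnm) hPm hPn]
    simp only [commonPerps]
  · intro m
    have h : (insert m (G.parallels m)).card = (insert l (G.parallels l)).card := by
      have := hcard m
      have := hcard l
      omega
    rw [← h]
    congr 1
    ext n
    rw [← hsame]
    simp

end Geometry

end PartialSherkPlane

theorem stmt_16 {Point Line : Type*} [Fintype Point] [Fintype Line]
    (G : PartialSherkPlane Point Line)
    (hthick : ∃ l : Line, ∀ P : Point, G.Inc P l → 3 ≤ Nat.card {m : Line // G.Inc P m}) :
    (∀ l : Line, ¬ ∃ P : Point, G.IsPole P l) ∧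
    (∀ (P : Point) (l : Line), ∃! m : Line, G.Inc P m ∧ G.Perp m l) := by
  classical
  obtain ⟨l₀, hl₀⟩ := hthick
  have hl : ∀ P, G.Inc P l₀ → 3 ≤ (G.pencil P).card := by
    intro P hP
    have h := hl₀ P hP
    rw [Nat.card_eq_fintype_card, Fintype.card_subtype] at h
    convert h
    simp [PartialSherkPlane.pencil]
  have huniq : ∀ (P : Point) (l g h : Line), G.Inc P g → G.Perp g l → G.Inc P h → G.Perp h l →
      g = h := by
    intro P l g h hPg hg hPh hh
    by_contra hne
    have hmem : l ∈ G.polars P := by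
      simp only [PartialSherkPlane.polars, Finset.mem_filter, Finset.mem_univ, true_and]
      exact fun e he => G.perp_of_two_perps hne hPg hPh hg hh he
    rw [G.polars_eq_empty hl P] at hmem
    exact Finset.notMem_empty l hmem
  refine ⟨?_, fun P l => ?_⟩
  · rintro l ⟨P, -, g, h, hgh, hPg, hPh, hg, hh⟩
    exact hgh (huniq P l g h hPg hg hPh hh)
  · obtain ⟨m, hPm, hm⟩ := G.b3 P l
    exact ⟨m, ⟨hPm, hm⟩, fun n hn => huniq P l n m hn.1 hn.2 hPm hm⟩
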